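/- arXiv:2506.04472 — 2 statements merged into one kernel-verified Lean document; each statement's English description precedes it below -/
import Mathlib

section
/- Let C be a category with pullbacks. Let p : B → A and k : C' → B be morphisms such that the pushforward p_*k : p_*C' → A of k along p exists, with counit ev : p^*p_*C' → C' over B, and let q : p^*p_*C' → p_*C' denote the projection of the pullback of p along p_*k. Let d : D → C' be a morphism such that the pushforward q_*(ev^*d) : q_*(ev^*D) → p_*C' of ev^*d : ev^*D → p^*p_*C' along q exists. Then the composite q_*(ev^*D) → p_*C' → A is a pushforward of the composite D → C' → B along p; that is, there are bijections Hom_{C/A}(x, q_*(ev^*D) → A) ≅ Hom_{C/B}(p^*x, k ∘ d) natural in x ∈ C/A. -/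
open CategoryTheory CategoryTheory.Limits

universe v u

namespace PaperHtpy

/-- `P`, together with the counit `ev`, is a pushforward of `k` along `p : B ⟶ A`:
it is a value at `k` of a right adjoint to the pullback functor `p^* : C/A ⥤ C/B`,
i.e. it represents `x ↦ Hom_{C/B}(p^* x, k)`. -/
structure IsPushforward {C : Type u} [Category.{v} C] [HasPullbacks C] {B A : C}
    (p : B ⟶ A) (k : Over B) (P : Over A) (ev : (Over.pullback p).obj P ⟶ k) : Prop where
  uniq : ∀ (x : Over A) (u : (Over.pullback p).obj x ⟶ k),
    ∃! v : x ⟶ P, (Over.pullback p).map v ≫ ev = u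

/-- the distributive law, Lemma 2.3 of the paper.  Let `C` have
pullbacks, `p : B ⟶ A` and `k : C' ⟶ B` be morphisms such that the pushforward
`p_* k : p_* C' ⟶ A` exists, with counit `ev : p^* p_* C' ⟶ C'` over `B`, and let
`q : p^* p_* C' ⟶ p_* C'` be the projection of the pullback of `p` along `p_* k`.
Let `d : D ⟶ C'` be a morphism such that the pushforward of `ev^* d` along `q`
exists, say `q_*(ev^* D)`.  Then the composite `q_*(ev^* D) ⟶ p_* C' ⟶ A` is a
pushforward of the composite `D ⟶ C' ⟶ B` along `p`: there are bijections
`Hom_{C/A}(x, q_*(ev^* D) → A) ≅ Hom_{C/B}(p^* x, k ∘ d)` natural in `x ∈ C/A`. -/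
theorem pushforward_distributivity
    {C : Type u} [Category.{v} C] [HasPullbacks C]
    {B A C' D : C} (p : B ⟶ A) (k : C' ⟶ B) (d : D ⟶ C')
    (P : Over A) (ev : (Over.pullback p).obj P ⟶ Over.mk k)
    (hP : IsPushforward p (Over.mk k) P ev)
    (Q : Over P.left) (evQ : (Over.pullback (pullback.fst P.hom p)).obj Q ⟶
      Over.mk (pullback.fst ev.left d))
    (hQ : IsPushforward (pullback.fst P.hom p) (Over.mk (pullback.fst ev.left d)) Q evQ) :
    ∃ e : ∀ x : Over A,
        (x ⟶ Over.mk (Q.hom ≫ P.hom)) ≃ ((Over.pullback p).obj x ⟶ Over.mk (d ≫ k)),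
      ∀ {x y : Over A} (f : x ⟶ y) (v : y ⟶ Over.mk (Q.hom ≫ P.hom)),
        e x (f ≫ v) = (Over.pullback p).map f ≫ e y v := by
  -- the counit of the composite
  let α : pullback (Q.hom ≫ P.hom) p ⟶ pullback Q.hom (pullback.fst P.hom p) :=
    pullback.lift (pullback.fst _ _)
      (pullback.lift (pullback.fst _ _ ≫ Q.hom) (pullback.snd _ _)
        (by rw [Category.assoc, pullback.condition])) (by rw [pullback.lift_fst])
  have hα1 : α ≫ pullback.fst _ _ = pullback.fst _ _ := pullback.lift_fst _ _ _
  have hα2 : α ≫ pullback.snd _ _ ≫ pullback.fst _ _ = pullback.fst _ _ ≫ Q.hom := by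
    rw [← Category.assoc, pullback.lift_snd, pullback.lift_fst]
  have hα3 : α ≫ pullback.snd _ _ ≫ pullback.snd _ _ = pullback.snd _ _ := by
    rw [← Category.assoc, pullback.lift_snd, pullback.lift_snd]
  have hevQ : evQ.left ≫ pullback.fst ev.left d = pullback.snd Q.hom (pullback.fst P.hom p) :=
    Over.w evQ
  have hev : ev.left ≫ k = pullback.snd P.hom p := Over.w ev
  let EVl : pullback (Q.hom ≫ P.hom) p ⟶ D := α ≫ evQ.left ≫ pullback.snd ev.left d
  have hEVd : EVl ≫ d = α ≫ pullback.snd _ _ ≫ ev.left := by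
    simp only [EVl, Category.assoc]
    rw [← pullback.condition, ← Category.assoc evQ.left, hevQ]
  let EV : (Over.pullback p).obj (Over.mk (Q.hom ≫ P.hom)) ⟶ Over.mk (d ≫ k) :=
    Over.homMk EVl (by
      change EVl ≫ d ≫ k = pullback.snd _ _
      rw [← Category.assoc, hEVd, Category.assoc, Category.assoc, hev, hα3])
  have hEV : EV.left = EVl := rfl
  -- first and second projections of pulled back maps
  have m1 : ∀ {x y : Over A} (f : x ⟶ y), ((Over.pullback p).map f).left ≫ pullback.fst y.hom p
      = pullback.fst x.hom p ≫ f.left := fun f => pullback.lift_fst _ _ _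
  have m2 : ∀ {x y : Over A} (f : x ⟶ y), ((Over.pullback p).map f).left ≫ pullback.snd y.hom p
      = pullback.snd x.hom p := fun f => pullback.lift_snd _ _ _
  have n1 : ∀ {x y : Over P.left} (f : x ⟶ y),
      ((Over.pullback (pullback.fst P.hom p)).map f).left ≫ pullback.fst y.hom _
      = pullback.fst x.hom _ ≫ f.left := fun f => pullback.lift_fst _ _ _
  have n2 : ∀ {x y : Over P.left} (f : x ⟶ y),
      ((Over.pullback (pullback.fst P.hom p)).map f).left ≫ pullback.snd y.hom _
      = pullback.snd x.hom _ := fun f => pullback.lift_snd _ _ _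
  -- the comparison of iterated pullbacks
  have hβ : ∀ {x : Over A} (t : x ⟶ P),
      ∃ (β : pullback t.left (pullback.fst P.hom p) ⟶ pullback x.hom p)
        (γ : pullback x.hom p ⟶ pullback t.left (pullback.fst P.hom p)),
        γ ≫ β = 𝟙 _ ∧ β ≫ pullback.fst _ _ = pullback.fst _ _ ∧
        β ≫ pullback.snd _ _ = pullback.snd _ _ ≫ pullback.snd _ _ ∧
        β ≫ ((Over.pullback p).map t).left = pullback.snd _ _ := by
    intro x t
    have b0 : pullback.fst t.left (pullback.fst P.hom p) ≫ x.hom =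
        (pullback.snd _ _ ≫ pullback.snd _ _) ≫ p := by
      rw [← Over.w t, ← Category.assoc, pullback.condition, Category.assoc, Category.assoc,
        pullback.condition]
    refine ⟨pullback.lift (pullback.fst _ _) (pullback.snd _ _ ≫ pullback.snd _ _) b0,
      pullback.lift (pullback.fst _ _) ((Over.pullback p).map t).left (m1 t).symm,
      ?_, pullback.lift_fst _ _ _, pullback.lift_snd _ _ _, ?_⟩
    · apply pullback.hom_ext
      · rw [Category.assoc, pullback.lift_fst, pullback.lift_fst, Category.id_comp]
      · rw [Category.assoc, pullback.lift_snd, ← Category.assoc, pullback.lift_snd,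
          Category.id_comp, m2]
    · apply pullback.hom_ext
      · erw [Category.assoc, m1, ← Category.assoc, pullback.lift_fst, pullback.condition]
      · erw [Category.assoc, m2, pullback.lift_snd]
  -- compatibility of the comparison with the counits
  have key : ∀ {x : Over A} (t : x ⟶ P) (β : pullback t.left (pullback.fst P.hom p) ⟶ pullback x.hom p)
      (_ : β ≫ pullback.fst _ _ = pullback.fst _ _)
      (_ : β ≫ pullback.snd _ _ = pullback.snd _ _ ≫ pullback.snd _ _)
      (w : Over.mk t.left ⟶ Q) (v : x ⟶ Over.mk (Q.hom ≫ P.hom)) (_ : v.left = w.left),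
      β ≫ ((Over.pullback p).map v ≫ EV).left =
        ((Over.pullback (pullback.fst P.hom p)).map w ≫ evQ).left ≫ pullback.snd ev.left d := by
    intro x t β h1 h2 w v hv
    have : β ≫ ((Over.pullback p).map v).left ≫ α =
        ((Over.pullback (pullback.fst P.hom p)).map w).left := by
      have m1v := m1 v
      have m2v := m2 v
      have n1w := n1 w
      have n2w := n2 w
      have hw : w.left ≫ Q.hom = t.left := Over.w w
      dsimp only [Over.mk_left, Over.mk_hom] at m1v m2v n1w n2w
      have c1 : (β ≫ ((Over.pullback p).map v).left) ≫ pullback.fst (Q.hom ≫ P.hom) p =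
          pullback.fst _ _ ≫ w.left := by
        erw [Category.assoc, m1v, ← Category.assoc, h1, hv]
      have c2 : (β ≫ ((Over.pullback p).map v).left) ≫ pullback.snd (Q.hom ≫ P.hom) p =
          pullback.snd _ _ ≫ pullback.snd _ _ := by
        erw [Category.assoc, m2v, h2]
      rw [← Category.assoc]
      generalize β ≫ ((Over.pullback p).map v).left = δ at c1 c2
      apply pullback.hom_ext
      · refine Eq.trans ?_ n1w.symm
        erw [Category.assoc, hα1, c1]
      · refine Eq.trans ?_ n2w.symm
        apply pullback.hom_ext
        · erw [Category.assoc, Category.assoc, hα2, ← Category.assoc, c1, Category.assoc, hw,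
            pullback.condition]
        · erw [Category.assoc, Category.assoc, hα3, c2]
    rw [Over.comp_left, Over.comp_left, ← this, hEV]
    simp only [EVl, Category.assoc]
  let Qm : Over.mk (Q.hom ≫ P.hom) ⟶ P := Over.homMk Q.hom
  let dm : Over.mk (d ≫ k) ⟶ Over.mk k := Over.homMk d
  have hQm : (Over.pullback p).map Qm ≫ ev = EV ≫ dm := by
    ext
    change ((Over.pullback p).map Qm).left ≫ ev.left = EVl ≫ d
    rw [hEVd, ← Category.assoc]
    congr 1
    apply pullback.hom_ext
    · erw [m1, Category.assoc, hα2]; rfl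
    · erw [m2, Category.assoc, hα3]; rfl
  have main : ∀ x : Over A, Function.Bijective
      (fun v : x ⟶ Over.mk (Q.hom ≫ P.hom) => (Over.pullback p).map v ≫ EV) := by
    intro x
    constructor
    · intro v₁ v₂ h
      dsimp only at h
      have ht : v₁ ≫ Qm = v₂ ≫ Qm := by
        refine (hP.uniq x ((Over.pullback p).map v₁ ≫ EV ≫ dm)).unique ?_ ?_
        · rw [Functor.map_comp, Category.assoc, hQm]
        · rw [Functor.map_comp, Category.assoc, hQm, ← Category.assoc, ← h, Category.assoc]
      obtain ⟨β, γ, hγ, h1, h2, h3⟩ := hβ (v₁ ≫ Qm)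
      let w₁ : Over.mk (v₁ ≫ Qm).left ⟶ Q := Over.homMk v₁.left rfl
      let w₂ : Over.mk (v₁ ≫ Qm).left ⟶ Q := Over.homMk v₂.left (by rw [ht]; rfl)
      have hw : w₁ = w₂ := by
        refine (hQ.uniq _ ((Over.pullback (pullback.fst P.hom p)).map w₁ ≫ evQ)).unique rfl ?_
        ext
        apply pullback.hom_ext
        · exact (Over.w ((Over.pullback (pullback.fst P.hom p)).map w₂ ≫ evQ)).trans
            (Over.w ((Over.pullback (pullback.fst P.hom p)).map w₁ ≫ evQ)).symm
        · have k1 := key _ β h1 h2 w₁ v₁ rfl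
          have k2 := key _ β h1 h2 w₂ v₂ rfl
          rw [← h] at k2
          exact k2.symm.trans k1
      ext
      exact congrArg (fun w : Over.mk (v₁ ≫ Qm).left ⟶ Q => w.left) hw
    · intro u
      obtain ⟨t, ht, -⟩ := hP.uniq x (u ≫ dm)
      obtain ⟨β, γ, hγ, h1, h2, h3⟩ := hβ t
      have ht' : ((Over.pullback p).map t).left ≫ ev.left = u.left ≫ d :=
        congrArg (fun w => CommaMorphism.left w) ht
      have hc : pullback.snd t.left (pullback.fst P.hom p) ≫ ev.left = (β ≫ u.left) ≫ d := by
        erw [← h3, Category.assoc, Category.assoc, ht']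
      let u' : (Over.pullback (pullback.fst P.hom p)).obj (Over.mk t.left) ⟶
          Over.mk (pullback.fst ev.left d) :=
        Over.homMk (pullback.lift (pullback.snd t.left (pullback.fst P.hom p)) (β ≫ u.left) hc)
          (pullback.lift_fst _ _ _)
      have hu' : u'.left ≫ pullback.snd ev.left d = β ≫ u.left := pullback.lift_snd _ _ _
      obtain ⟨w, hw, -⟩ := hQ.uniq _ u'
      have hwQ : w.left ≫ Q.hom = t.left := Over.w w
      let v : x ⟶ Over.mk (Q.hom ≫ P.hom) := Over.homMk w.left (by
        change w.left ≫ Q.hom ≫ P.hom = x.hom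
        rw [← Category.assoc, hwQ, Over.w t])
      refine ⟨v, ?_⟩
      have k1 := key t β h1 h2 w v rfl
      rw [hw, hu'] at k1
      ext
      have cancel : ∀ {Z : C} (a b : pullback x.hom p ⟶ Z), β ≫ a = β ≫ b → a = b := by
        intro Z a b hab
        rw [← Category.id_comp a, ← Category.id_comp b, ← hγ, Category.assoc, Category.assoc, hab]
      exact cancel _ _ k1
  refine ⟨fun x => Equiv.ofBijective _ (main x), ?_⟩
  intro x y f v
  simp only [Equiv.ofBijective_apply, Functor.map_comp, Category.assoc]

end PaperHtpy
end

section
/- Let I be the walking span category, with objects 0, 01, 1 and non-identity morphisms l : 01 → 0 and r : 01 → 1. There exist functors A, B : I → Set such that the functions A(l) and B(l) are bijections, but the component [A,B](l) : [A,B]_{01} → [A,B]_0 of the exponential object [A,B] = B^A in the cartesian closed functor category Set^I is not a bijection. (Concretely, one may take A_0 = A_{01} = B_0 = B_{01} to be one-element sets and A_1, B_1 to be two-element sets, with A(r) and B(r) not surjective.) Hence, taking weak equivalences in Set to be the bijections, the full subcategory of homotopical diagrams in Set^I is not closed under exponentials. -/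
open CategoryTheory CategoryTheory.Limits

universe v u

namespace PaperHtpy

/-- `E` is an exponential object `[A,B] = B^A`: the data of bijections
`Hom(X × A, B) ≅ Hom(X, E)` natural in `X`. -/
structure IsExponential {D : Type u} [Category.{v} D] [HasBinaryProducts D]
    (A B E : D) where
  e : ∀ X : D, (X ⨯ A ⟶ B) ≃ (X ⟶ E)
  natural : ∀ {X Y : D} (f : X ⟶ Y) (g : Y ⨯ A ⟶ B),
    e X (prod.map f (𝟙 A) ≫ g) = f ≫ e Y g

/-- The evaluation map `E ⨯ A ⟶ B` of an exponential object. -/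
def IsExponential.eval {D : Type u} [Category.{v} D] [HasBinaryProducts D]
    {A B E : D} (h : IsExponential A B E) : E ⨯ A ⟶ B :=
  (h.e E).symm (𝟙 E)

/-- Morphisms of span diagrams. -/
def spanHom {F G : WalkingSpan ⥤ Type u}
    (z : F.obj WalkingSpan.zero ⟶ G.obj WalkingSpan.zero)
    (l : F.obj WalkingSpan.left ⟶ G.obj WalkingSpan.left)
    (r : F.obj WalkingSpan.right ⟶ G.obj WalkingSpan.right)
    (hl : F.map WalkingSpan.Hom.fst ≫ l = z ≫ G.map WalkingSpan.Hom.fst)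
    (hr : F.map WalkingSpan.Hom.snd ≫ r = z ≫ G.map WalkingSpan.Hom.snd) : F ⟶ G where
  app j := match j with
    | none => z
    | some WalkingPair.left => l
    | some WalkingPair.right => r
  naturality := by
    rintro X Y (_ | (_ | _))
    · erw [F.map_id, G.map_id]; simp
    · exact hl
    · exact hr

/-- The diagram `1 ⟵ 1 ⟶ 2`. -/
def diagA : WalkingSpan ⥤ Type u :=
  span (𝟙 PUnit.{u+1}) (↾fun _ : PUnit.{u+1} => (ULift.up true : ULift.{u} Bool))

/-- The terminal diagram. -/
def diagT : WalkingSpan ⥤ Type u :=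
  span (𝟙 PUnit.{u+1}) (𝟙 PUnit.{u+1})

/-- The diagram represented by the object `0`. -/
def diagL : WalkingSpan ⥤ Type u :=
  span (↾fun x : PEmpty.{u+1} => (x.elim : PUnit.{u+1})) (𝟙 PEmpty.{u+1})

/-- The inclusion of `diagL` in the terminal diagram. -/
def inclL : diagL.{u} ⟶ diagT.{u} :=
  spanHom (↾fun x : PEmpty.{u+1} => (x.elim : PUnit.{u+1})) (𝟙 PUnit.{u+1})
    (↾fun x : PEmpty.{u+1} => (x.elim : PUnit.{u+1}))
    (by ext x; exact PEmpty.elim x) (by ext x; exact PEmpty.elim x)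

/-- The map to the terminal diagram. -/
def toT : diagA.{u} ⟶ diagT.{u} :=
  spanHom (𝟙 PUnit.{u+1}) (𝟙 PUnit.{u+1}) (↾fun _ : ULift.{u} Bool => PUnit.unit.{u+1})
    (by ext x; rfl) (by ext x; rfl)

/-- The endomorphism of `diagA` collapsing the two-element set. -/
def collapse : diagA.{u} ⟶ diagA.{u} :=
  spanHom (𝟙 PUnit.{u+1}) (𝟙 PUnit.{u+1})
    (↾fun _ : ULift.{u} Bool => (ULift.up true : ULift.{u} Bool))
    (by ext x; rfl) (by ext x; rfl)

theorem collapse_ne : collapse.{u} ≠ 𝟙 _ := by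
  intro h
  have h1 := congrArg (fun k : diagA.{u} ⟶ diagA.{u} =>
    (k.app WalkingSpan.right (ULift.up false : ULift.{u} Bool) : ULift.{u} Bool)) h
  have h2 : (ULift.up true : ULift.{u} Bool) = ULift.up false := h1
  simp at h2

theorem hom_eq_of_diagL {X : WalkingSpan ⥤ Type u} (p : X ⟶ diagL.{u})
    (g h : X ⟶ diagA.{u}) : g = h := by
  ext j x
  match j, x with
  | none, x => exact PEmpty.elim (p.app WalkingSpan.zero x : PEmpty.{u+1})
  | some WalkingPair.left, x => exact (rfl : (_ : PUnit.{u+1}) = _)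
  | some WalkingPair.right, x => exact PEmpty.elim (p.app WalkingSpan.right x : PEmpty.{u+1})

theorem incl_cancel {E : WalkingSpan ⥤ Type u}
    (hE : Function.Injective (E.map WalkingSpan.Hom.fst))
    (g h : diagT.{u} ⟶ E) (e : inclL ≫ g = inclL ≫ h) : g = h := by
  have key : ∀ k : diagT.{u} ⟶ E, E.map WalkingSpan.Hom.fst
      (k.app WalkingSpan.zero PUnit.unit.{u+1}) = k.app WalkingSpan.left PUnit.unit.{u+1} :=
    fun k => (ConcreteCategory.congr_hom (k.naturality WalkingSpan.Hom.fst) PUnit.unit.{u+1}).symm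
  have keyr : ∀ k : diagT.{u} ⟶ E, E.map WalkingSpan.Hom.snd
      (k.app WalkingSpan.zero PUnit.unit.{u+1}) = k.app WalkingSpan.right PUnit.unit.{u+1} :=
    fun k => (ConcreteCategory.congr_hom (k.naturality WalkingSpan.Hom.snd) PUnit.unit.{u+1}).symm
  have hl : g.app WalkingSpan.left PUnit.unit.{u+1} = h.app WalkingSpan.left PUnit.unit.{u+1} :=
    congrArg (fun k : diagL.{u} ⟶ E => k.app WalkingSpan.left PUnit.unit.{u+1}) e
  have hz : g.app WalkingSpan.zero PUnit.unit.{u+1} = h.app WalkingSpan.zero PUnit.unit.{u+1} :=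
    hE ((key g).trans (hl.trans (key h).symm))
  have hr : g.app WalkingSpan.right PUnit.unit.{u+1} = h.app WalkingSpan.right PUnit.unit.{u+1} :=
    (keyr g).symm.trans ((congrArg _ hz).trans (keyr h))
  ext j x
  match j, x with
  | none, x => exact hz
  | some WalkingPair.left, x => exact hl
  | some WalkingPair.right, x => exact hr

/-- Example 3.7 of the paper.  Let `I` be the walking span
`0 ⟵ 01 ⟶ 1` (here `zero = 01`, `left = 0`, `right = 1`, and
`l = WalkingSpan.Hom.fst : 01 ⟶ 0`).  There are functors `A, B : I ⥤ Set` such that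
`A(l)` and `B(l)` are bijections, but the component `[A,B](l)` of the exponential
object `[A,B] = B^A` in the cartesian closed category `Set^I` is not a bijection.
Hence (taking bijections as the weak equivalences of `Set`) the homotopical diagrams
in `Set^I` are not closed under exponentials. -/
theorem span_exponential_not_homotopical :
    ∃ A B : WalkingSpan ⥤ Type u,
      Function.Bijective (A.map WalkingSpan.Hom.fst) ∧
      Function.Bijective (B.map WalkingSpan.Hom.fst) ∧
      ∀ (E : WalkingSpan ⥤ Type u), IsExponential A B E →
        ¬ Function.Bijective (E.map WalkingSpan.Hom.fst) := by
  refine ⟨diagA, diagA, Function.bijective_id, Function.bijective_id, ?_⟩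
  intro E hE hb
  have h1 : hE.e diagT (prod.snd ≫ collapse) = hE.e diagT prod.snd := by
    apply incl_cancel hb.1
    rw [← hE.natural, ← hE.natural]
    exact congrArg _ (hom_eq_of_diagL prod.fst _ _)
  have h2 := congrArg (fun k : diagT.{u} ⨯ diagA.{u} ⟶ diagA.{u} => prod.lift toT.{u} (𝟙 diagA.{u}) ≫ k) ((hE.e diagT).injective h1)
  apply collapse_ne.{u}
  have h3 : prod.lift toT.{u} (𝟙 diagA.{u}) ≫ prod.snd = 𝟙 diagA.{u} := prod.lift_snd _ _
  calc collapse.{u} = 𝟙 diagA.{u} ≫ collapse.{u} := (Category.id_comp _).symm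
    _ = (prod.lift toT.{u} (𝟙 diagA.{u}) ≫ prod.snd) ≫ collapse.{u} :=
        congrArg (fun k : diagA.{u} ⟶ diagA.{u} => k ≫ collapse.{u}) h3.symm
    _ = prod.lift toT.{u} (𝟙 diagA.{u}) ≫ prod.snd ≫ collapse.{u} := Category.assoc _ _ _
    _ = prod.lift toT.{u} (𝟙 diagA.{u}) ≫ prod.snd := h2
    _ = 𝟙 diagA.{u} := h3

end PaperHtpy
end
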